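/- Let n be an odd positive integer. Then the complex dimension of the χ'-isotypic component of the diagonal coinvariant ring R_W of W(B_n) satisfies dim_ℂ (R_W)^{χ'} ≥ (n+1) + (n-1)(n-3)/4 (note (n−1)(n−3) is divisible by 4 when n is odd). -/

import Mathlib

open MvPolynomial

/-- The action of the signed permutation `(ε, σ) ∈ W(Bₙ)` on the polynomial ring
`ℂ[x₁,…,xₙ,y₁,…,yₙ]`, sending `xᵢ ↦ εᵢ x_{σ(i)}` and `yᵢ ↦ εᵢ y_{σ(i)}`. -/
noncomputable def bAct (n : ℕ) (ε : Fin n → ℤˣ) (σ : Equiv.Perm (Fin n)) :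
    MvPolynomial (Fin n ⊕ Fin n) ℂ →ₐ[ℂ] MvPolynomial (Fin n ⊕ Fin n) ℂ :=
  aeval (Sum.elim
    (fun i => (((ε i : ℤ) : ℂ)) • X (Sum.inl (σ i)))
    (fun i => (((ε i : ℤ) : ℂ)) • X (Sum.inr (σ i))))

/-- The ideal `I_W` generated by the `W(Bₙ)`-invariant polynomials of positive degree
(equivalently, by the invariant polynomials with zero constant term). -/
noncomputable def diagIdeal (n : ℕ) : Ideal (MvPolynomial (Fin n ⊕ Fin n) ℂ) :=
  Ideal.span {f | (∀ ε σ, bAct n ε σ f = f) ∧ constantCoeff f = 0}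

/-- The χ′-isotypic component of the diagonal coinvariant ring `R_W = R/I_W`, where
`χ'(ε,σ) = ∏ᵢ εᵢ` (trivial on permutations, `−1` on each sign change): it is the image
in `R/I_W` of those polynomials `g` with `(ε,σ)·g − χ'(ε,σ)·g ∈ I_W` for all
`(ε,σ) ∈ W(Bₙ)`. -/
noncomputable def chiIsotypic (n : ℕ) :
    Submodule ℂ (MvPolynomial (Fin n ⊕ Fin n) ℂ ⧸ diagIdeal n) :=
  (⨅ (ε : Fin n → ℤˣ) (σ : Equiv.Perm (Fin n)),
    Submodule.comap
      ((bAct n ε σ).toLinearMap - (((∏ i, ε i : ℤˣ) : ℤ) : ℂ) • LinearMap.id)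
      (Submodule.restrictScalars ℂ (diagIdeal n))).map
    (Ideal.Quotient.mkₐ ℂ (diagIdeal n)).toLinearMap


/-- product of factorials of the exponents -/
noncomputable def mfact (μ : (ℕ × ℕ) →₀ ℕ) : ℂ := μ.prod fun _ k => (k.factorial : ℂ)

lemma mfact_add_single (μ : (ℕ × ℕ) →₀ ℕ) (m : ℕ × ℕ) :
    mfact (μ + Finsupp.single m 1) = (μ m + 1) * mfact μ := by
  classical
  unfold mfact
  rw [Finsupp.prod_of_support_subset (s := insert m μ.support) (f := μ + Finsupp.single m 1),
    Finsupp.prod_of_support_subset (s := insert m μ.support) (f := μ),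
    ← Finset.mul_prod_erase _ _ (Finset.mem_insert_self m _),
    ← Finset.mul_prod_erase _ _ (Finset.mem_insert_self m _), ← mul_assoc]
  · congr 1
    · simp [Nat.factorial_succ]
    · refine Finset.prod_congr rfl fun x hx => ?_
      have : x ≠ m := (Finset.mem_erase.1 hx).1
      simp [this.symm]
  · exact Finset.subset_insert _ _
  · simp
  · intro x hx
    simp only [Finsupp.mem_support_iff, Finsupp.add_apply, Finset.mem_insert, Finsupp.single_apply] at hx ⊢
    by_contra h
    push Not at h
    simp [h.2, h.1.symm] at hx
  · simp

lemma mfact_ne_zero (μ : (ℕ × ℕ) →₀ ℕ) : mfact μ ≠ 0 := by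
  unfold mfact Finsupp.prod
  exact Finset.prod_ne_zero_iff.2 fun _ _ => Nat.cast_ne_zero.2 (Nat.factorial_ne_zero _)

/-- apolar pairing against `P` -/
noncomputable def pair (P : MvPolynomial (ℕ × ℕ) ℂ) : MvPolynomial (ℕ × ℕ) ℂ →ₗ[ℂ] ℂ :=
  (basisMonomials (ℕ × ℕ) ℂ).constr ℂ fun μ => mfact μ * coeff μ P

lemma pair_monomial (P : MvPolynomial (ℕ × ℕ) ℂ) (μ) :
    pair P (monomial μ 1) = mfact μ * coeff μ P := by
  have := (basisMonomials (ℕ × ℕ) ℂ).constr_basis ℂ (fun μ => mfact μ * coeff μ P) μ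
  rwa [coe_basisMonomials] at this

lemma pair_add (P Q : MvPolynomial (ℕ × ℕ) ℂ) (R) : pair (P + Q) R = pair P R + pair Q R := by
  have : pair (P + Q) = pair P + pair Q := by
    refine (basisMonomials (ℕ × ℕ) ℂ).ext fun μ => ?_
    simp [pair_monomial, mul_add]
  rw [this]; rfl

lemma pair_smul (c : ℂ) (P : MvPolynomial (ℕ × ℕ) ℂ) (R) : pair (c • P) R = c * pair P R := by
  have : pair (c • P) = c • pair P := by
    refine (basisMonomials (ℕ × ℕ) ℂ).ext fun μ => ?_
    simp [pair_monomial]; ring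
  rw [this]; rfl

lemma pair_zero (R) : pair 0 R = 0 := by
  simpa using pair_smul 0 0 R

lemma pair_sum {ι : Type*} (s : Finset ι) (c : ι → ℂ) (P : ι → MvPolynomial (ℕ × ℕ) ℂ) (R) :
    pair (∑ i ∈ s, c i • P i) R = ∑ i ∈ s, c i * pair (P i) R := by
  classical
  induction s using Finset.induction_on with
  | empty => simp [pair_zero]
  | insert a s ha ih => rw [Finset.sum_insert ha, Finset.sum_insert ha, pair_add, pair_smul, ih]

lemma pair_mul_X (P Q : MvPolynomial (ℕ × ℕ) ℂ) (m) :
    pair P (Q * X m) = pair (pderiv m P) Q := by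
  have : pair P ∘ₗ LinearMap.mulRight ℂ (X m) = pair (pderiv m P) := by
    refine (basisMonomials (ℕ × ℕ) ℂ).ext fun μ => ?_
    simp only [coe_basisMonomials, LinearMap.comp_apply, LinearMap.mulRight_apply, pair_monomial,
      X, monomial_mul, mul_one, mfact_add_single, coeff_pderiv]
    ring
  exact congrArg (fun f => f Q) this

/-- the lowering derivation `z_m ↦ z_{m-a}` -/
noncomputable def lowD (a : ℕ × ℕ) :
    Derivation ℂ (MvPolynomial (ℕ × ℕ) ℂ) (MvPolynomial (ℕ × ℕ) ℂ) :=
  mkDerivation ℂ fun m => if a.1 ≤ m.1 ∧ a.2 ≤ m.2 then X (m.1 - a.1, m.2 - a.2) else 0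

/-- the raising derivation `w_m ↦ w_{m+a}` -/
noncomputable def raiseD (a : ℕ × ℕ) :
    Derivation ℂ (MvPolynomial (ℕ × ℕ) ℂ) (MvPolynomial (ℕ × ℕ) ℂ) :=
  mkDerivation ℂ fun m => X (m + a)

lemma pderiv_lowD (a m : ℕ × ℕ) (P : MvPolynomial (ℕ × ℕ) ℂ) :
    pderiv m (lowD a P) = lowD a (pderiv m P) + pderiv (m + a) P := by
  classical
  have : ⁅(pderiv m : Derivation ℂ (MvPolynomial (ℕ × ℕ) ℂ) _), lowD a⁆ = pderiv (m + a) := by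
    refine MvPolynomial.derivation_ext fun k => ?_
    rw [Derivation.commutator_apply]
    obtain ⟨k1, k2⟩ := k
    obtain ⟨a1, a2⟩ := a
    obtain ⟨m1, m2⟩ := m
    have h0 : lowD (a1, a2) ((Pi.single (M := fun _ => MvPolynomial (ℕ × ℕ) ℂ) (m1, m2) 1 : _ → _) (k1, k2)) = 0 := by
      rw [Pi.single_apply]; split_ifs <;> simp
    rw [pderiv_X, h0, pderiv_X, sub_zero]
    simp only [lowD, mkDerivation_X, Pi.single_apply, Prod.mk_add_mk, Prod.mk.injEq]
    by_cases h : a1 ≤ k1 ∧ a2 ≤ k2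
    · rw [if_pos h, pderiv_X, Pi.single_apply]
      refine if_congr ?_ rfl rfl
      simp only [Prod.mk.injEq]
      omega
    · rw [if_neg h, if_neg (by omega), map_zero]
  have h2 := congrArg (fun D => D P) this
  simp only [Derivation.commutator_apply] at h2
  rw [← h2]; ring

lemma pair_raiseD (a : ℕ × ℕ) (Q P : MvPolynomial (ℕ × ℕ) ℂ) :
    pair P (raiseD a Q) = pair (lowD a P) Q := by
  induction Q using MvPolynomial.induction_on generalizing P with
  | C c =>
    have h1 : raiseD a (C c) = 0 := by simp [raiseD]
    have h2 : (C c : MvPolynomial (ℕ × ℕ) ℂ) = c • monomial 0 1 := by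
      rw [monomial_zero', smul_eq_C_mul]; simp
    rw [h1, h2, map_smul, pair_monomial, map_zero]
    have : coeff 0 (lowD a P) = 0 := by
      induction P using MvPolynomial.induction_on with
      | C c => simp [lowD]
      | add p q hp hq => simp [hp, hq]
      | mul_X p i hp =>
        have : coeff 0 (lowD a (X i)) = 0 := by
          simp only [lowD, mkDerivation_X]
          split_ifs <;> simp
        rw [← constantCoeff_eq] at *
        simp [Derivation.leibniz, this]
    simp [this]
  | add p q hp hq => simp [hp, hq]
  | mul_X p i hp =>
    rw [Derivation.leibniz, pair_mul_X, smul_eq_mul, smul_eq_mul, map_add,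
      mul_comm (X i), pair_mul_X, hp, pderiv_lowD, pair_add]
    have : raiseD a (X i) = X (i + a) := by simp [raiseD]
    rw [this, pair_mul_X, add_comm]

/-- the monomial with exponent vector `m i` in the variables `x_i, y_i` -/
noncomputable def T {n : ℕ} (m : Fin n → ℕ × ℕ) : MvPolynomial (Fin n ⊕ Fin n) ℂ :=
  ∏ i, (X (Sum.inl i) ^ (m i).1 * X (Sum.inr i) ^ (m i).2)

/-- the polarized power sum -/
noncomputable def pw (n : ℕ) (a : ℕ × ℕ) : MvPolynomial (Fin n ⊕ Fin n) ℂ :=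
  ∑ i, (X (Sum.inl i) ^ a.1 * X (Sum.inr i) ^ a.2)

lemma T_eq_monomial {n : ℕ} (s : Fin n ⊕ Fin n →₀ ℕ) :
    monomial s (1 : ℂ) = T fun i => (s (Sum.inl i), s (Sum.inr i)) := by
  rw [monomial_eq, Finsupp.prod_fintype _ _ (by simp), Fintype.prod_sum_type, T,
    Finset.prod_mul_distrib]
  simp

lemma T_eq_monomial' {n : ℕ} (m : Fin n → ℕ × ℕ) :
    T m = monomial (Finsupp.equivFunOnFinite.symm (Sum.elim (fun i => (m i).1) (fun i => (m i).2)))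
      (1 : ℂ) := by
  rw [T_eq_monomial]; simp

/-- the symbol map -/
noncomputable def symb (n : ℕ) : MvPolynomial (Fin n ⊕ Fin n) ℂ →ₗ[ℂ] MvPolynomial (ℕ × ℕ) ℂ :=
  (basisMonomials (Fin n ⊕ Fin n) ℂ).constr ℂ fun s => ∏ i, X (s (Sum.inl i), s (Sum.inr i))

lemma symb_T {n : ℕ} (m : Fin n → ℕ × ℕ) : symb n (T m) = ∏ i, X (m i) := by
  have := (basisMonomials (Fin n ⊕ Fin n) ℂ).constr_basis ℂ
    (fun s => ∏ i, (X (s (Sum.inl i), s (Sum.inr i)) : MvPolynomial (ℕ × ℕ) ℂ))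
    (Finsupp.equivFunOnFinite.symm (Sum.elim (fun i => (m i).1) (fun i => (m i).2)))
  rw [coe_basisMonomials] at this
  beta_reduce at this
  rw [← T_eq_monomial'] at this
  rw [symb, this]
  simp

lemma linear_ext_T {n : ℕ} {M : Type*} [AddCommGroup M] [Module ℂ M]
    {f g : MvPolynomial (Fin n ⊕ Fin n) ℂ →ₗ[ℂ] M} (h : ∀ m, f (T m) = g (T m)) : f = g := by
  refine (basisMonomials _ ℂ).ext fun s => ?_
  rw [coe_basisMonomials]
  beta_reduce
  rw [T_eq_monomial]
  exact h _

lemma T_update {n : ℕ} (m : Fin n → ℕ × ℕ) (i : Fin n) (a : ℕ × ℕ) :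
    T (Function.update m i (m i + a)) =
      (X (Sum.inl i) ^ a.1 * X (Sum.inr i) ^ a.2) * T m := by
  unfold T
  rw [← Finset.mul_prod_erase _ _ (Finset.mem_univ i),
    ← Finset.mul_prod_erase (a := i) (Finset.univ) (fun i => _ * _) (Finset.mem_univ i), ← mul_assoc]
  congr 1
  · simp [pow_add]; ring
  · refine Finset.prod_congr rfl fun x hx => ?_
    rw [Function.update_of_ne (Finset.mem_erase.1 hx).1]

lemma pw_mul_T {n : ℕ} (m : Fin n → ℕ × ℕ) (a : ℕ × ℕ) :
    pw n a * T m = ∑ i, T (Function.update m i (m i + a)) := by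
  simp only [T_update, pw, Finset.sum_mul]

lemma derivation_prod {ι A : Type*} [CommRing A] [Algebra ℂ A] [DecidableEq ι]
    (D : Derivation ℂ A A) (s : Finset ι) (f : ι → A) :
    D (∏ i ∈ s, f i) = ∑ i ∈ s, (∏ j ∈ s.erase i, f j) * D (f i) := by
  induction s using Finset.induction_on with
  | empty => simp
  | insert a s ha ih =>
    rw [Finset.prod_insert ha, Derivation.leibniz, ih, Finset.sum_insert ha, Finset.erase_insert ha,
      smul_eq_mul, smul_eq_mul, add_comm, Finset.mul_sum]
    congr 1
    refine Finset.sum_congr rfl fun i hi => ?_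
    have hne : a ≠ i := fun h => ha (h ▸ hi)
    rw [Finset.erase_insert_of_ne hne, Finset.prod_insert (by simp [ha]), mul_assoc]

lemma symb_pw_mul {n : ℕ} (a : ℕ × ℕ) (r : MvPolynomial (Fin n ⊕ Fin n) ℂ) :
    symb n (pw n a * r) = raiseD a (symb n r) := by
  classical
  have : symb n ∘ₗ LinearMap.mulLeft ℂ (pw n a) = (raiseD a).toLinearMap ∘ₗ symb n := by
    refine linear_ext_T fun m => ?_
    simp only [LinearMap.comp_apply, LinearMap.mulLeft_apply, pw_mul_T, map_sum, symb_T]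
    change _ = raiseD a _
    rw [derivation_prod]
    refine Finset.sum_congr rfl fun i _ => ?_
    have h : raiseD a (X (m i)) = X (m i + a) := by simp [raiseD]
    rw [h, ← Finset.mul_prod_erase _ _ (Finset.mem_univ i), mul_comm]
    congr 1
    · refine Finset.prod_congr rfl fun x hx => ?_
      rw [Function.update_of_ne (Finset.mem_erase.1 hx).1]
    · simp
  exact congrArg (fun f => f r) this

/-- the ideal of positive even polarized power sums -/
noncomputable def pwIdeal (n : ℕ) : Ideal (MvPolynomial (Fin n ⊕ Fin n) ℂ) :=
  Ideal.span {p | ∃ a : ℕ × ℕ, Even (a.1 + a.2) ∧ a ≠ 0 ∧ p = pw n a}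

lemma pair_symb_eq_zero {n : ℕ} {P : MvPolynomial (ℕ × ℕ) ℂ}
    (hP : ∀ a : ℕ × ℕ, Even (a.1 + a.2) → a ≠ 0 → lowD a P = 0)
    {r : MvPolynomial (Fin n ⊕ Fin n) ℂ} (hr : r ∈ pwIdeal n) : pair P (symb n r) = 0 := by
  refine Submodule.span_induction (p := fun r _ => ∀ q, pair P (symb n (r * q)) = 0)
    ?_ ?_ ?_ ?_ hr 1 |> fun h => by simpa using h
  · rintro _ ⟨a, ha, ha0, rfl⟩ q
    rw [symb_pw_mul, pair_raiseD, hP a ha ha0, pair_zero]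
  · simp
  · intro x y _ _ hx hy q
    rw [add_mul, map_add, map_add, hx, hy, add_zero]
  · intro c x _ hx q
    rw [smul_eq_mul, mul_comm c, mul_assoc]
    exact hx _

/-- the permutation sum -/
noncomputable def S {n : ℕ} (m : Fin n → ℕ × ℕ) : MvPolynomial (Fin n ⊕ Fin n) ℂ :=
  ∑ σ : Equiv.Perm (Fin n), T (m ∘ σ)

lemma S_comp {n : ℕ} (m : Fin n → ℕ × ℕ) (τ : Equiv.Perm (Fin n)) : S (m ∘ τ) = S m := by
  unfold S
  exact Fintype.sum_equiv (Equiv.mulLeft τ) _ _ fun σ => by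
    simp [Function.comp_assoc]

lemma pw_mul_S {n : ℕ} (m : Fin n → ℕ × ℕ) (a : ℕ × ℕ) :
    pw n a * S m = ∑ i, S (Function.update m i (m i + a)) := by
  classical
  unfold S
  rw [Finset.mul_sum, Finset.sum_comm]
  refine Finset.sum_congr rfl fun σ _ => ?_
  rw [pw_mul_T]
  refine Fintype.sum_equiv σ _ _ fun i => ?_
  rw [← Function.update_comp_eq_of_injective _ σ.injective]
  rfl

lemma S_mem {n : ℕ} (k : ℕ) : ∀ (m : Fin n → ℕ × ℕ), (∀ i, Even ((m i).1 + (m i).2)) →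
    (Finset.univ.filter fun i => m i ≠ 0).card = k → k ≠ 0 → S m ∈ pwIdeal n := by
  classical
  induction k using Nat.strong_induction_on with
  | _ k ih =>
  intro m hm hk hk0
  have hne : (Finset.univ.filter fun i => m i ≠ 0).Nonempty := by
    rw [← Finset.card_pos]; omega
  obtain ⟨i₀, hi₀⟩ := hne
  have hi0 : m i₀ ≠ 0 := by simpa using hi₀
  set m' := Function.update m i₀ 0 with hm'
  have key := pw_mul_S m' (m i₀)
  have hmem : pw n (m i₀) * S m' ∈ pwIdeal n :=
    Ideal.mul_mem_right _ _ (Ideal.subset_span ⟨_, hm i₀, hi0, rfl⟩)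
  rw [key, ← Finset.sum_filter_add_sum_filter_not _ (fun i => m' i = 0)] at hmem
  have h1 : ∑ i with m' i = 0, S (Function.update m' i (m' i + m i₀)) =
      ((Finset.univ.filter fun i => m' i = 0).card : ℂ) • S m := by
    rw [Finset.sum_congr rfl (g := fun _ => S m), Finset.sum_const, ← Nat.cast_smul_eq_nsmul ℂ]
    intro i hi
    have hi : m' i = 0 := by simpa using hi
    rw [← S_comp m (Equiv.swap i i₀)]
    congr 1
    funext j
    rw [hi, zero_add]
    by_cases hj : j = i
    · subst hj; simp
    · rw [Function.update_of_ne hj]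
      by_cases hj2 : j = i₀
      · subst hj2
        simp only [hm', Function.update_self, Function.comp_apply, Equiv.swap_apply_right]
        rw [hm', Function.update_of_ne (Ne.symm hj)] at hi
        exact hi.symm
      · simp [hm', Function.update_of_ne hj2, Equiv.swap_apply_of_ne_of_ne hj hj2]
  have h2 : ∑ i with ¬ m' i = 0, S (Function.update m' i (m' i + m i₀)) ∈ pwIdeal n := by
    refine Ideal.sum_mem _ fun i hi => ?_
    have hi : m' i ≠ 0 := by simpa using hi
    have hii : i ≠ i₀ := by rintro rfl; simp [hm'] at hi
    have hmi : m' i = m i := by rw [hm', Function.update_of_ne hii]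
    have hset : (Finset.univ.filter fun j => Function.update m' i (m' i + m i₀) j ≠ 0) =
        (Finset.univ.filter fun j => m j ≠ 0).erase i₀ := by
      ext j
      simp only [Finset.mem_filter, Finset.mem_univ, true_and, Finset.mem_erase]
      by_cases hj : j = i
      · subst hj
        rw [Function.update_self, hmi]
        rw [hmi] at hi
        simp [hii, hi]
      · rw [Function.update_of_ne hj]
        by_cases hj2 : j = i₀
        · subst hj2; simp [hm']
        · rw [hm', Function.update_of_ne hj2]; simp [hj2]
    have hcard : (Finset.univ.filter fun j => Function.update m' i (m' i + m i₀) j ≠ 0).card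
        = k - 1 := by
      rw [hset, Finset.card_erase_of_mem hi₀, hk]
    have hk2 : k - 1 ≠ 0 := by
      rw [← hcard, ← Nat.pos_iff_ne_zero, Finset.card_pos, hset]
      exact ⟨i, by simp [hii, ← hmi, hi]⟩
    refine ih (k - 1) (by omega) _ ?_ hcard hk2
    intro j
    by_cases hj : j = i
    · subst hj
      rw [Function.update_self, hmi]
      have e1 := hm j
      have e2 := hm i₀
      simp only [Prod.fst_add, Prod.snd_add]
      rw [Nat.even_iff] at e1 e2 ⊢
      omega
    · rw [Function.update_of_ne hj]
      by_cases hj2 : j = i₀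
      · subst hj2; simp [hm']
      · rw [hm', Function.update_of_ne hj2]; exact hm j
  rw [h1] at hmem
  have h3 := (Ideal.add_mem_iff_left _ h2).1 hmem
  have hc : ((Finset.univ.filter fun i => m' i = 0).card : ℂ) ≠ 0 := by
    rw [Nat.cast_ne_zero, ← Nat.pos_iff_ne_zero, Finset.card_pos]
    exact ⟨i₀, by simp [hm']⟩
  rw [smul_eq_C_mul] at h3
  have h4 := Ideal.mul_mem_left _ (C ((Finset.univ.filter fun i => m' i = 0).card : ℂ)⁻¹) h3
  rwa [← mul_assoc, ← C_mul, inv_mul_cancel₀ hc, C_1, one_mul] at h4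

lemma bAct_T {n : ℕ} (ε : Fin n → ℤˣ) (σ : Equiv.Perm (Fin n)) (m : Fin n → ℕ × ℕ) :
    bAct n ε σ (T m) =
      (∏ i, (((ε i : ℤ) : ℂ)) ^ ((m i).1 + (m i).2)) • T (m ∘ σ.symm) := by
  unfold T bAct
  rw [map_prod, ← Equiv.prod_comp σ (fun i => X (Sum.inl i) ^ ((m ∘ σ.symm) i).1 *
    X (Sum.inr i) ^ ((m ∘ σ.symm) i).2), smul_eq_C_mul, map_prod, ← Finset.prod_mul_distrib]
  refine Finset.prod_congr rfl fun i _ => ?_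
  simp only [map_mul, map_pow, aeval_X, Sum.elim_inl, Sum.elim_inr, smul_eq_C_mul,
    Function.comp_apply, Equiv.symm_apply_apply]
  ring

lemma bAct_S {n : ℕ} (ε : Fin n → ℤˣ) (σ : Equiv.Perm (Fin n)) (m : Fin n → ℕ × ℕ)
    (hm : ∀ i, Odd ((m i).1 + (m i).2)) :
    bAct n ε σ (S m) = (((∏ i, ε i : ℤˣ) : ℤ) : ℂ) • S m := by
  unfold S
  rw [map_sum, Finset.smul_sum]
  refine Fintype.sum_equiv (Equiv.mulRight σ⁻¹) _ _ fun τ => ?_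
  rw [bAct_T]
  congr 1
  push_cast
  refine Finset.prod_congr rfl fun i _ => ?_
  obtain ⟨k, hk⟩ := hm (τ i)
  simp only [Function.comp_apply, hk]
  rcases Int.units_eq_one_or (ε i) with h | h <;> simp [h, pow_add, pow_mul]

lemma sum_bAct_T {n : ℕ} (m : Fin n → ℕ × ℕ) (hm : m ≠ 0) :
    ∑ ε : Fin n → ℤˣ, ∑ σ : Equiv.Perm (Fin n), bAct n ε σ (T m) ∈ pwIdeal n := by
  classical
  have h1 : ∀ ε : Fin n → ℤˣ, ∑ σ : Equiv.Perm (Fin n), bAct n ε σ (T m) =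
      (∏ i, (((ε i : ℤ) : ℂ)) ^ ((m i).1 + (m i).2)) • S m := by
    intro ε
    simp only [bAct_T, S]
    rw [Finset.smul_sum]
    exact Fintype.sum_equiv (Equiv.inv _) _ _ fun σ => rfl
  simp only [h1]
  rw [← Finset.sum_smul]
  by_cases hev : ∀ i, Even ((m i).1 + (m i).2)
  · rw [smul_eq_C_mul]
    refine Ideal.mul_mem_left _ _ (S_mem _ m hev rfl ?_)
    obtain ⟨i, hi⟩ := Function.ne_iff.1 hm
    rw [← Nat.pos_iff_ne_zero, Finset.card_pos]
    exact ⟨i, by simpa using hi⟩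
  · push Not at hev
    obtain ⟨i, hi⟩ := hev
    have h2 : ∑ ε : Fin n → ℤˣ, ∏ i, (((ε i : ℤ) : ℂ)) ^ ((m i).1 + (m i).2) =
        ∏ i, ∑ e : ℤˣ, (((e : ℤ) : ℂ)) ^ ((m i).1 + (m i).2) := by
      rw [Finset.prod_univ_sum, Fintype.piFinset_univ]
    rw [h2, Finset.prod_eq_zero (Finset.mem_univ i), zero_smul]
    · exact zero_mem _
    · rw [Nat.not_even_iff_odd] at hi
      rw [show (Finset.univ : Finset ℤˣ) = {1, -1} from rfl, Finset.sum_pair (by decide)]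
      simp [hi.neg_one_pow]

lemma mem_of_nsmul_mem {τ : Type*} (I : Ideal (MvPolynomial τ ℂ)) {k : ℕ} (hk : k ≠ 0)
    {q : MvPolynomial τ ℂ} (h : k • q ∈ I) : q ∈ I := by
  rw [← Nat.cast_smul_eq_nsmul ℂ, smul_eq_C_mul] at h
  have h4 := Ideal.mul_mem_left _ (C (k : ℂ)⁻¹) h
  rwa [← mul_assoc, ← C_mul, inv_mul_cancel₀ (Nat.cast_ne_zero.2 hk), C_1, one_mul] at h4

lemma diagIdeal_le (n : ℕ) : diagIdeal n ≤ pwIdeal n := by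
  refine Ideal.span_le.2 ?_
  rintro q ⟨hq, hq0⟩
  have h1 : ∑ ε : Fin n → ℤˣ, ∑ σ : Equiv.Perm (Fin n), bAct n ε σ q ∈ pwIdeal n := by
    have : ∑ ε : Fin n → ℤˣ, ∑ σ : Equiv.Perm (Fin n), bAct n ε σ q =
        ∑ s ∈ q.support, C (coeff s q) * ∑ ε : Fin n → ℤˣ, ∑ σ : Equiv.Perm (Fin n),
          bAct n ε σ (monomial s 1) := by
      have hA : ∀ r, ∑ ε : Fin n → ℤˣ, ∑ σ : Equiv.Perm (Fin n), bAct n ε σ r =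
          (∑ ε : Fin n → ℤˣ, ∑ σ : Equiv.Perm (Fin n), (bAct n ε σ).toLinearMap) r := by
        intro r
        simp only [LinearMap.sum_apply, AlgHom.toLinearMap_apply]
      simp only [hA]
      conv_lhs => rw [q.as_sum]
      rw [map_sum]
      refine Finset.sum_congr rfl fun s _ => ?_
      rw [← smul_eq_C_mul, ← map_smul, smul_monomial, smul_eq_mul, mul_one]
    rw [this]
    refine Ideal.sum_mem _ fun s hs => Ideal.mul_mem_left _ _ ?_
    rw [T_eq_monomial]
    refine sum_bAct_T _ fun h => ?_
    have hs0 : s = 0 := by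
      ext j
      rcases j with j | j
      · exact congrArg Prod.fst (congrFun h j)
      · exact congrArg Prod.snd (congrFun h j)
    subst hs0
    rw [mem_support_iff] at hs
    exact hs hq0
  simp only [hq, Finset.sum_const, smul_smul] at h1
  exact mem_of_nsmul_mem _ (mul_ne_zero (Finset.card_ne_zero.2 ⟨1, Finset.mem_univ _⟩)
      (Finset.card_ne_zero.2 ⟨1, Finset.mem_univ _⟩)) h1

lemma pow_mem_diagIdeal {n : ℕ} (g : Fin n → Fin n ⊕ Fin n)
    (hg : ∀ ε σ i, bAct n ε σ (X (g i)) = (((ε i : ℤ) : ℂ)) • X (g (σ i))) (i : Fin n) :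
    (X (g i)) ^ (2 * n) ∈ diagIdeal n := by
  obtain ⟨E, hE⟩ : ∃ E : Polynomial (MvPolynomial (Fin n ⊕ Fin n) ℂ), E =
    ∏ j, (Polynomial.X - Polynomial.C (X (g j) ^ 2)) - Polynomial.X ^ n := ⟨_, rfl⟩
  have hcoef : ∀ k, E.coeff k ∈ diagIdeal n := by
    intro k
    refine Ideal.subset_span ⟨fun ε σ => ?_, ?_⟩
    · have hsq : ∀ j, (bAct n ε σ).toRingHom (X (g j) ^ 2) = X (g (σ j)) ^ 2 := by
        intro j
        change bAct n ε σ (X (g j) ^ 2) = _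
        rw [map_pow, hg ε σ j]
        rcases Int.units_eq_one_or (ε j) with h | h <;> simp [h]
      have : E.map (bAct n ε σ).toRingHom = E := by
        rw [hE, Polynomial.map_sub, Polynomial.map_pow, Polynomial.map_X, Polynomial.map_prod]
        simp only [Polynomial.map_sub, Polynomial.map_X, Polynomial.map_C, hsq]
        rw [Equiv.prod_comp σ (fun j => (Polynomial.X - Polynomial.C (X (g j) ^ 2)))]
      have h3 := congrArg (fun P => Polynomial.coeff P k) this
      simp only [Polynomial.coeff_map] at h3
      exact h3
    · rw [← Polynomial.coeff_map, hE, Polynomial.map_sub, Polynomial.map_prod]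
      simp
  have h0 : E.map (Ideal.Quotient.mk (diagIdeal n)) = 0 := by
    ext k
    rw [Polynomial.coeff_map, Polynomial.coeff_zero, Ideal.Quotient.eq_zero_iff_mem]
    exact hcoef k
  have h1 : Ideal.Quotient.mk (diagIdeal n) (E.eval (X (g i) ^ 2)) = 0 := by
    rw [← Polynomial.eval_map_apply, h0, Polynomial.eval_zero]
  have h2 : E.eval (X (g i) ^ 2) = - (X (g i)) ^ (2 * n) := by
    rw [hE, Polynomial.eval_sub, Polynomial.eval_prod, Finset.prod_eq_zero (Finset.mem_univ i)]
    · simp [pow_mul]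
    · simp
  rw [h2, Ideal.Quotient.eq_zero_iff_mem, neg_mem_iff] at h1
  exact h1

lemma finite_quotient (n : ℕ) (hn : 0 < n) :
    Module.Finite ℂ (MvPolynomial (Fin n ⊕ Fin n) ℂ ⧸ diagIdeal n) := by
  have hX : ∀ j, (X j : MvPolynomial (Fin n ⊕ Fin n) ℂ) ^ (2 * n) ∈ diagIdeal n := by
    rintro (j | j)
    · exact pow_mem_diagIdeal Sum.inl (fun ε σ i => by simp [bAct]) j
    · exact pow_mem_diagIdeal Sum.inr (fun ε σ i => by simp [bAct]) j
  have h_integral : Algebra.IsIntegral ℂ (MvPolynomial (Fin n ⊕ Fin n) ℂ ⧸ diagIdeal n) := by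
    refine ⟨fun r => ?_⟩
    obtain ⟨r, rfl⟩ := Ideal.Quotient.mk_surjective r
    induction r using MvPolynomial.induction_on with
    | C c => exact isIntegral_algebraMap (R := ℂ) (x := c)
    | add p q hp hq => rw [map_add]; exact hp.add hq
    | mul_X p i hp =>
      rw [map_mul]
      refine hp.mul (IsIntegral.of_pow (n := 2 * n) (by omega) ?_)
      rw [← map_pow, Ideal.Quotient.eq_zero_iff_mem.2 (hX i)]
      exact isIntegral_zero
  have : Algebra.FiniteType ℂ (MvPolynomial (Fin n ⊕ Fin n) ℂ ⧸ diagIdeal n) :=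
    Algebra.FiniteType.of_surjective (Ideal.Quotient.mkₐ ℂ (diagIdeal n))
      (Ideal.Quotient.mkₐ_surjective _ _)
  exact Algebra.IsIntegral.finite

set_option linter.unusedSimpArgs false

/-- odd homogeneous polynomials of degree `d` killed by all even lowering derivations -/
structure InK (d : ℕ) (P : MvPolynomial (ℕ × ℕ) ℂ) : Prop where
  hom : P.IsHomogeneous d
  odd : P ∈ supported ℂ {m : ℕ × ℕ | Odd (m.1 + m.2)}
  low : ∀ a : ℕ × ℕ, Even (a.1 + a.2) → a ≠ 0 → lowD a P = 0

lemma InK.mul {d e : ℕ} {P Q : MvPolynomial (ℕ × ℕ) ℂ} (hP : InK d P) (hQ : InK e Q) :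
    InK (d + e) (P * Q) where
  hom := hP.hom.mul hQ.hom
  odd := mul_mem hP.odd hQ.odd
  low a h h0 := by rw [Derivation.leibniz, hP.low a h h0, hQ.low a h h0, smul_zero, smul_zero, add_zero]

lemma InK.pow {d : ℕ} {P : MvPolynomial (ℕ × ℕ) ℂ} (hP : InK d P) (k : ℕ) :
    InK (d * k) (P ^ k) where
  hom := hP.hom.pow k
  odd := pow_mem hP.odd k
  low a h h0 := by rw [Derivation.leibniz_pow, hP.low a h h0, smul_zero, smul_zero]

/-- the generic variable -/
noncomputable abbrev z (i j : ℕ) : MvPolynomial (ℕ × ℕ) ℂ := X (i, j)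

lemma lowD_z (a : ℕ × ℕ) (i j : ℕ) :
    lowD a (z i j) = if a.1 ≤ i ∧ a.2 ≤ j then z (i - a.1) (j - a.2) else 0 := by
  simp [lowD, mkDerivation_X]

lemma lowD_z_zero {a : ℕ × ℕ} {i j : ℕ} (h : i + j < a.1 + a.2) : lowD a (z i j) = 0 := by
  rw [lowD_z, if_neg]; omega

lemma num_two : (2 : MvPolynomial (ℕ × ℕ) ℂ) = C 2 := (map_ofNat C 2).symm
lemma num_three : (3 : MvPolynomial (ℕ × ℕ) ℂ) = C 3 := (map_ofNat C 3).symm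

lemma lowD_two (a : ℕ × ℕ) : lowD a 2 = 0 := by rw [num_two]; exact derivation_C _ _
lemma lowD_three (a : ℕ × ℕ) : lowD a 3 = 0 := by rw [num_three]; exact derivation_C _ _

noncomputable def F3 : MvPolynomial (ℕ × ℕ) ℂ :=
  z 3 0 * z 0 1 ^ 3 - z 2 1 * z 0 1 ^ 2 * z 1 0 + z 1 2 * z 0 1 * z 1 0 ^ 2 - z 0 3 * z 1 0 ^ 3

noncomputable def F5 : MvPolynomial (ℕ × ℕ) ℂ :=
  z 5 0 * z 0 1 ^ 5 - z 4 1 * z 0 1 ^ 4 * z 1 0 + z 3 2 * z 0 1 ^ 3 * z 1 0 ^ 2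
    - z 2 3 * z 0 1 ^ 2 * z 1 0 ^ 3 + z 1 4 * z 0 1 * z 1 0 ^ 4 - z 0 5 * z 1 0 ^ 5

noncomputable def H1 : MvPolynomial (ℕ × ℕ) ℂ :=
  3 * z 3 0 * z 0 1 ^ 2 - 2 * z 2 1 * z 0 1 * z 1 0 + z 1 2 * z 1 0 ^ 2

noncomputable def H2 : MvPolynomial (ℕ × ℕ) ℂ :=
  z 2 1 * z 0 1 ^ 2 - 2 * z 1 2 * z 0 1 * z 1 0 + 3 * z 0 3 * z 1 0 ^ 2

noncomputable def G1 : MvPolynomial (ℕ × ℕ) ℂ := z 1 0 * F5 - F3 * H1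
noncomputable def G2 : MvPolynomial (ℕ × ℕ) ℂ := z 0 1 * F5 - F3 * H2

lemma pos_of_even {a : ℕ × ℕ} (h : Even (a.1 + a.2)) (h0 : a ≠ 0) : 2 ≤ a.1 + a.2 := by
  obtain ⟨a1, a2⟩ := a
  rw [Nat.even_iff] at h
  simp only [ne_eq, Prod.mk_eq_zero] at h0
  simp only at h ⊢
  omega

lemma lowD_linear {a : ℕ × ℕ} (h : 2 ≤ a.1 + a.2) : lowD a (z 1 0) = 0 ∧ lowD a (z 0 1) = 0 :=
  ⟨lowD_z_zero (by omega), lowD_z_zero (by omega)⟩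

lemma lowD_F3 (a : ℕ × ℕ) (h2 : 2 ≤ a.1 + a.2) : lowD a F3 =
    lowD a (z 3 0) * z 0 1 ^ 3 - lowD a (z 2 1) * z 0 1 ^ 2 * z 1 0
      + lowD a (z 1 2) * z 0 1 * z 1 0 ^ 2 - lowD a (z 0 3) * z 1 0 ^ 3 := by
  simp only [F3, map_sub, map_add, Derivation.leibniz, Derivation.leibniz_pow,
    (lowD_linear h2).1, (lowD_linear h2).2, smul_zero, smul_eq_mul]
  ring

lemma lowD_F5 (a : ℕ × ℕ) (h2 : 2 ≤ a.1 + a.2) : lowD a F5 =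
    lowD a (z 5 0) * z 0 1 ^ 5 - lowD a (z 4 1) * z 0 1 ^ 4 * z 1 0
      + lowD a (z 3 2) * z 0 1 ^ 3 * z 1 0 ^ 2
      - lowD a (z 2 3) * z 0 1 ^ 2 * z 1 0 ^ 3 + lowD a (z 1 4) * z 0 1 * z 1 0 ^ 4
      - lowD a (z 0 5) * z 1 0 ^ 5 := by
  simp only [F5, map_sub, map_add, Derivation.leibniz, Derivation.leibniz_pow,
    (lowD_linear h2).1, (lowD_linear h2).2, smul_zero, smul_eq_mul]
  ring

lemma lowD_H1 (a : ℕ × ℕ) (h2 : 2 ≤ a.1 + a.2) : lowD a H1 =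
    3 * lowD a (z 3 0) * z 0 1 ^ 2 - 2 * lowD a (z 2 1) * z 0 1 * z 1 0
      + lowD a (z 1 2) * z 1 0 ^ 2 := by
  simp only [H1, map_sub, map_add, Derivation.leibniz, Derivation.leibniz_pow, lowD_two, lowD_three,
    (lowD_linear h2).1, (lowD_linear h2).2, smul_zero, smul_eq_mul]
  ring

lemma lowD_H2 (a : ℕ × ℕ) (h2 : 2 ≤ a.1 + a.2) : lowD a H2 =
    lowD a (z 2 1) * z 0 1 ^ 2 - 2 * lowD a (z 1 2) * z 0 1 * z 1 0
      + 3 * lowD a (z 0 3) * z 1 0 ^ 2 := by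
  simp only [H2, map_sub, map_add, Derivation.leibniz, Derivation.leibniz_pow, lowD_two, lowD_three,
    (lowD_linear h2).1, (lowD_linear h2).2, smul_zero, smul_eq_mul]
  ring

lemma even_cases {a : ℕ × ℕ} (h : Even (a.1 + a.2)) (h2 : 2 ≤ a.1 + a.2) :
    5 < a.1 + a.2 ∨ a = (2, 0) ∨ a = (1, 1) ∨ a = (0, 2) ∨ a = (4, 0) ∨ a = (3, 1) ∨ a = (2, 2) ∨
      a = (1, 3) ∨ a = (0, 4) := by
  obtain ⟨a1, a2⟩ := a
  rw [Nat.even_iff] at h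
  simp only [Prod.mk.injEq] at h h2 ⊢
  omega

lemma low_F3 (a : ℕ × ℕ) (h : Even (a.1 + a.2)) (h0 : a ≠ 0) : lowD a F3 = 0 := by
  have h2 := pos_of_even h h0
  rw [lowD_F3 a h2]
  rcases even_cases h h2 with h5 | h5 | h5 | h5 | h5 | h5 | h5 | h5 | h5
  · simp only [lowD_z_zero (show 3 + 0 < a.1 + a.2 by omega),
      lowD_z_zero (show 2 + 1 < a.1 + a.2 by omega), lowD_z_zero (show 1 + 2 < a.1 + a.2 by omega),
      lowD_z_zero (show 0 + 3 < a.1 + a.2 by omega)]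
    ring
  all_goals
    subst h5
    norm_num [lowD_z]
  all_goals ring

lemma low_G1 (a : ℕ × ℕ) (h : Even (a.1 + a.2)) (h0 : a ≠ 0) : lowD a G1 = 0 := by
  have h2 := pos_of_even h h0
  rw [G1, map_sub, Derivation.leibniz, Derivation.leibniz, low_F3 a h h0, (lowD_linear h2).1,
    lowD_F5 a h2, lowD_H1 a h2]
  simp only [smul_zero, smul_eq_mul, add_zero]
  rcases even_cases h h2 with h5 | h5 | h5 | h5 | h5 | h5 | h5 | h5 | h5
  · simp only [lowD_z_zero (show 3 + 0 < a.1 + a.2 by omega),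
      lowD_z_zero (show 2 + 1 < a.1 + a.2 by omega), lowD_z_zero (show 1 + 2 < a.1 + a.2 by omega),
      lowD_z_zero (show 0 + 3 < a.1 + a.2 by omega),
      lowD_z_zero (show 5 + 0 < a.1 + a.2 by omega), lowD_z_zero (show 4 + 1 < a.1 + a.2 by omega),
      lowD_z_zero (show 3 + 2 < a.1 + a.2 by omega), lowD_z_zero (show 2 + 3 < a.1 + a.2 by omega),
      lowD_z_zero (show 1 + 4 < a.1 + a.2 by omega), lowD_z_zero (show 0 + 5 < a.1 + a.2 by omega)]
    ring
  all_goals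
    subst h5
    simp only [lowD_z, F3]
    norm_num
  all_goals ring

lemma low_G2 (a : ℕ × ℕ) (h : Even (a.1 + a.2)) (h0 : a ≠ 0) : lowD a G2 = 0 := by
  have h2 := pos_of_even h h0
  rw [G2, map_sub, Derivation.leibniz, Derivation.leibniz, low_F3 a h h0, (lowD_linear h2).2,
    lowD_F5 a h2, lowD_H2 a h2]
  simp only [smul_zero, smul_eq_mul, add_zero]
  rcases even_cases h h2 with h5 | h5 | h5 | h5 | h5 | h5 | h5 | h5 | h5
  · simp only [lowD_z_zero (show 3 + 0 < a.1 + a.2 by omega),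
      lowD_z_zero (show 2 + 1 < a.1 + a.2 by omega), lowD_z_zero (show 1 + 2 < a.1 + a.2 by omega),
      lowD_z_zero (show 0 + 3 < a.1 + a.2 by omega),
      lowD_z_zero (show 5 + 0 < a.1 + a.2 by omega), lowD_z_zero (show 4 + 1 < a.1 + a.2 by omega),
      lowD_z_zero (show 3 + 2 < a.1 + a.2 by omega), lowD_z_zero (show 2 + 3 < a.1 + a.2 by omega),
      lowD_z_zero (show 1 + 4 < a.1 + a.2 by omega), lowD_z_zero (show 0 + 5 < a.1 + a.2 by omega)]
    ring
  all_goals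
    subst h5
    simp only [lowD_z, F3]
    norm_num
  all_goals ring

lemma z_odd {i j : ℕ} (h : Odd (i + j)) :
    z i j ∈ supported ℂ {m : ℕ × ℕ | Odd (m.1 + m.2)} :=
  X_mem_supported.2 h

lemma odd_F3 : F3 ∈ supported ℂ {m : ℕ × ℕ | Odd (m.1 + m.2)} := by
  unfold F3
  repeat' first
    | exact z_odd (by decide)
    | apply sub_mem | apply add_mem | apply pow_mem | apply mul_mem

lemma odd_F5 : F5 ∈ supported ℂ {m : ℕ × ℕ | Odd (m.1 + m.2)} := by
  unfold F5
  repeat' first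
    | exact z_odd (by decide)
    | apply sub_mem | apply add_mem | apply pow_mem | apply mul_mem

lemma odd_H1 : H1 ∈ supported ℂ {m : ℕ × ℕ | Odd (m.1 + m.2)} := by
  unfold H1
  repeat' first
    | exact ofNat_mem _ _ | exact z_odd (by decide)
    | apply sub_mem | apply add_mem | apply pow_mem | apply mul_mem

lemma odd_H2 : H2 ∈ supported ℂ {m : ℕ × ℕ | Odd (m.1 + m.2)} := by
  unfold H2
  repeat' first
    | exact ofNat_mem _ _ | exact z_odd (by decide)
    | apply sub_mem | apply add_mem | apply pow_mem | apply mul_mem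

lemma hom_z (i j : ℕ) : (z i j).IsHomogeneous 1 := isHomogeneous_X _ _

lemma hom_two : (2 : MvPolynomial (ℕ × ℕ) ℂ).IsHomogeneous 0 := by
  rw [num_two]; exact isHomogeneous_C _ _
lemma hom_three : (3 : MvPolynomial (ℕ × ℕ) ℂ).IsHomogeneous 0 := by
  rw [num_three]; exact isHomogeneous_C _ _

lemma hom_F3 : F3.IsHomogeneous 4 := by
  unfold F3
  refine (((?_ : IsHomogeneous _ 4).sub ?_).add ?_).sub ?_
  · exact (hom_z _ _).mul ((hom_z _ _).pow 3)
  · exact ((hom_z _ _).mul ((hom_z _ _).pow 2)).mul (hom_z _ _)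
  · exact ((hom_z _ _).mul (hom_z _ _)).mul ((hom_z _ _).pow 2)
  · exact (hom_z _ _).mul ((hom_z _ _).pow 3)

lemma hom_F5 : F5.IsHomogeneous 6 := by
  unfold F5
  refine (((((?_ : IsHomogeneous _ 6).sub ?_).add ?_).sub ?_).add ?_).sub ?_
  · exact (hom_z _ _).mul ((hom_z _ _).pow 5)
  · exact ((hom_z _ _).mul ((hom_z _ _).pow 4)).mul (hom_z _ _)
  · exact ((hom_z _ _).mul ((hom_z _ _).pow 3)).mul ((hom_z _ _).pow 2)
  · exact ((hom_z _ _).mul ((hom_z _ _).pow 2)).mul ((hom_z _ _).pow 3)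
  · exact ((hom_z _ _).mul (hom_z _ _)).mul ((hom_z _ _).pow 4)
  · exact (hom_z _ _).mul ((hom_z _ _).pow 5)

lemma hom_H1 : H1.IsHomogeneous 3 := by
  unfold H1
  refine ((?_ : IsHomogeneous _ 3).sub ?_).add ?_
  · exact (hom_three.mul (hom_z _ _)).mul ((hom_z _ _).pow 2)
  · exact ((hom_two.mul (hom_z _ _)).mul (hom_z _ _)).mul (hom_z _ _)
  · exact (hom_z _ _).mul ((hom_z _ _).pow 2)

lemma hom_H2 : H2.IsHomogeneous 3 := by
  unfold H2
  refine ((?_ : IsHomogeneous _ 3).sub ?_).add ?_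
  · exact (hom_z _ _).mul ((hom_z _ _).pow 2)
  · exact ((hom_two.mul (hom_z _ _)).mul (hom_z _ _)).mul (hom_z _ _)
  · exact (hom_three.mul (hom_z _ _)).mul ((hom_z _ _).pow 2)

lemma inK_F3 : InK 4 F3 := ⟨hom_F3, odd_F3, low_F3⟩

lemma inK_G1 : InK 7 G1 :=
  ⟨((hom_z 1 0).mul hom_F5).sub (hom_F3.mul hom_H1),
    sub_mem (mul_mem (z_odd (by decide)) odd_F5) (mul_mem odd_F3 odd_H1), low_G1⟩

lemma inK_G2 : InK 7 G2 :=
  ⟨((hom_z 0 1).mul hom_F5).sub (hom_F3.mul hom_H2),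
    sub_mem (mul_mem (z_odd (by decide)) odd_F5) (mul_mem odd_F3 odd_H2), low_G2⟩

lemma inK_10 : InK 1 (z 1 0) :=
  ⟨hom_z _ _, z_odd (by decide), fun _ h h0 => (lowD_linear (pos_of_even h h0)).1⟩

lemma inK_01 : InK 1 (z 0 1) :=
  ⟨hom_z _ _, z_odd (by decide), fun _ h h0 => (lowD_linear (pos_of_even h h0)).2⟩

/-- the family of invariants -/
noncomputable def fam (n : ℕ) (s : Σ _ : ℕ, ℕ) : MvPolynomial (ℕ × ℕ) ℂ :=
  if Even s.1 then z 1 0 ^ s.2 * z 0 1 ^ (n - 2 * s.1 - s.2) * F3 ^ (s.1 / 2)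
  else if s.2 = 0 then z 0 1 ^ (n - 2 * s.1 - 1) * F3 ^ ((s.1 - 3) / 2) * G2
  else z 1 0 ^ (s.2 - 1) * z 0 1 ^ (n - 2 * s.1 - s.2) * F3 ^ ((s.1 - 3) / 2) * G1

lemma InK.cast {d e : ℕ} {P : MvPolynomial (ℕ × ℕ) ℂ} (h : InK d P) (he : d = e) : InK e P :=
  he ▸ h

/-- index set -/
def idx (k : ℕ) : Finset (Σ _ : ℕ, ℕ) :=
  ((Finset.range (k + 1)).erase 1).sigma fun j => Finset.range (2 * k + 1 - 2 * j + 1)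

lemma mem_idx {k : ℕ} {s : Σ _ : ℕ, ℕ} : s ∈ idx k ↔ s.1 ≠ 1 ∧ s.1 ≤ k ∧ s.2 ≤ 2 * k + 1 - 2 * s.1 := by
  simp [idx, and_assoc]

lemma inK_fam {k : ℕ} {s : Σ _ : ℕ, ℕ} (hs : s ∈ idx k) : InK (2 * k + 1) (fam (2 * k + 1) s) := by
  rw [mem_idx] at hs
  obtain ⟨h1, h2, h3⟩ := hs
  unfold fam
  split_ifs with he h0
  · rw [Nat.even_iff] at he
    exact (((inK_10.pow _).mul (inK_01.pow _)).mul (inK_F3.pow _)).cast (by omega)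
  · rw [Nat.even_iff] at he
    exact (((inK_01.pow _).mul (inK_F3.pow _)).mul inK_G2).cast (by omega)
  · rw [Nat.even_iff] at he
    exact ((((inK_10.pow _).mul (inK_01.pow _)).mul (inK_F3.pow _)).mul inK_G1).cast (by omega)

/-- specialization -/
noncomputable def spec : MvPolynomial (ℕ × ℕ) ℂ →ₐ[ℂ] MvPolynomial (Fin 3) ℂ :=
  aeval fun m => if m = (1, 0) then X 0 else if m = (0, 1) then 1 else if m = (3, 0) then X 1
    else if m = (5, 0) then X 2 else 0

lemma spec_z (i j : ℕ) : spec (z i j) = if (i, j) = (1, 0) then X 0 else if (i, j) = (0, 1) then 1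
    else if (i, j) = (3, 0) then X 1 else if (i, j) = (5, 0) then X 2 else 0 := by
  simp only [spec, z, aeval_X]

lemma spec_F3 : spec F3 = X 1 := by
  simp [F3, spec_z]
lemma spec_F5 : spec F5 = X 2 := by
  simp [F5, spec_z]
lemma spec_H1 : spec H1 = 3 * X 1 := by
  have h3 : spec 3 = 3 := map_ofNat spec 3
  simp [H1, spec_z, h3]
lemma spec_H2 : spec H2 = 0 := by
  simp [H2, spec_z]
lemma spec_G1 : spec G1 = X 0 * X 2 - 3 * X 1 ^ 2 := by
  simp only [G1, map_sub, map_mul, spec_F3, spec_F5, spec_H1, spec_z, if_true]; ring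
lemma spec_G2 : spec G2 = X 2 := by
  simp [G2, spec_F3, spec_F5, spec_H2, spec_z]

/-- exponent vectors -/
noncomputable def ex (a b c : ℕ) : Fin 3 →₀ ℕ := Finsupp.equivFunOnFinite.symm ![a, b, c]

lemma coeff_mon (a b c a' b' c' : ℕ) :
    coeff (ex a' b' c') (X 0 ^ a * X 1 ^ b * X 2 ^ c : MvPolynomial (Fin 3) ℂ) =
      if a = a' ∧ b = b' ∧ c = c' then 1 else 0 := by
  have : (X 0 ^ a * X 1 ^ b * X 2 ^ c : MvPolynomial (Fin 3) ℂ) = monomial (ex a b c) 1 := by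
    rw [monomial_eq, Finsupp.prod_fintype _ _ (by simp), Fin.prod_univ_three]
    simp [ex]
  rw [this, coeff_monomial]
  refine if_congr ?_ rfl rfl
  simp [ex]

lemma spec_fam (n : ℕ) (s : Σ _ : ℕ, ℕ) : spec (fam n s) =
    if Even s.1 then X 0 ^ s.2 * X 1 ^ (s.1 / 2) * X 2 ^ 0
    else if s.2 = 0 then X 0 ^ 0 * X 1 ^ ((s.1 - 3) / 2) * X 2 ^ 1
    else X 0 ^ (s.2 - 1 + 1) * X 1 ^ ((s.1 - 3) / 2) * X 2 ^ 1
      - C 3 * (X 0 ^ (s.2 - 1) * X 1 ^ ((s.1 - 3) / 2 + 2) * X 2 ^ 0) := by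
  unfold fam
  have h3 : (C 3 : MvPolynomial (Fin 3) ℂ) = 3 := map_ofNat C 3
  have hz1 : spec (z 1 0) = X 0 := by simp [spec_z]
  have hz2 : spec (z 0 1) = 1 := by simp [spec_z]
  split_ifs
  · simp only [map_mul, map_pow, hz1, hz2, spec_F3]; ring
  · simp only [map_mul, map_pow, hz2, spec_F3, spec_G2]; ring
  · simp only [map_mul, map_pow, hz1, hz2, spec_F3, spec_G1, h3]; ring

lemma fam_indep (k : ℕ) (c : (Σ _ : ℕ, ℕ) → ℂ) (h : ∑ s ∈ idx k, c s • fam (2 * k + 1) s = 0) :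
    ∀ s ∈ idx k, c s = 0 := by
  have hco : ∀ e, ∑ s ∈ idx k, c s * coeff e (spec (fam (2 * k + 1) s)) = 0 := by
    intro e
    have := congrArg (fun p => coeff e (spec p)) h
    simpa [map_sum, coeff_sum, coeff_smul] using this
  have hodd : ∀ s ∈ idx k, ¬ Even s.1 → c s = 0 := by
    intro s hs hse
    have := hco (ex s.2 ((s.1 - 3) / 2) 1)
    rw [Finset.sum_eq_single s] at this
    · rw [spec_fam, if_neg hse] at this
      split_ifs at this with h0
      · rw [coeff_mon, if_pos (by omega)] at this
        simpa using this
      · rw [coeff_sub, coeff_C_mul, coeff_mon, coeff_mon, if_pos (by omega), if_neg (by omega)] at this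
        simpa using this
    · intro t ht hts
      rw [spec_fam]
      have hne : ¬ (t.1 = s.1 ∧ t.2 = s.2) := by
        rintro ⟨h1, h2⟩
        exact hts (Sigma.ext h1 (heq_of_eq h2))
      rw [mem_idx] at hs ht
      rw [Nat.even_iff] at hse
      split_ifs with h1 h2
      · rw [coeff_mon, if_neg (by omega), mul_zero]
      · rw [Nat.even_iff] at h1
        rw [coeff_mon, if_neg (by omega), mul_zero]
      · rw [Nat.even_iff] at h1
        rw [coeff_sub, coeff_C_mul, coeff_mon, coeff_mon, if_neg (by omega), if_neg (by omega)]
        simp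
    · exact fun hh => absurd hs hh
  intro s hs
  by_cases hse : Even s.1
  · have := hco (ex s.2 (s.1 / 2) 0)
    rw [Finset.sum_eq_single s] at this
    · rw [spec_fam, if_pos hse, coeff_mon, if_pos (by omega)] at this
      simpa using this
    · intro t ht hts
      by_cases hte : Even t.1
      · rw [spec_fam, if_pos hte]
        have hne : ¬ (t.1 = s.1 ∧ t.2 = s.2) := by
          rintro ⟨h1, h2⟩
          exact hts (Sigma.ext h1 (heq_of_eq h2))
        rw [Nat.even_iff] at hse hte
        rw [coeff_mon, if_neg (by omega), mul_zero]
      · rw [hodd t ht hte, zero_mul]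
    · exact fun hh => absurd hs hh
  · exact hodd s hs hse

lemma card_idx (k : ℕ) : (idx k).card = k ^ 2 + k + 2 := by
  rw [idx, Finset.card_sigma]
  simp only [Finset.card_range]
  have h1 : ∀ k : ℕ, ∑ j ∈ Finset.range (k + 1), (2 * k + 1 - 2 * j + 1) = (k + 1) * (k + 2) := by
    intro k
    rw [← Finset.sum_range_reflect]
    have : ∀ j ∈ Finset.range (k + 1), (2 * k + 1 - 2 * (k + 1 - 1 - j) + 1) = 2 * (j + 1) := by
      intro j hj
      rw [Finset.mem_range] at hj
      omega
    rw [Finset.sum_congr rfl this]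
    clear this
    induction k with
    | zero => simp
    | succ k ih => rw [Finset.sum_range_succ, ih]; ring
  rcases Nat.eq_zero_or_pos k with rfl | hk
  · decide
  · have h2 := Finset.add_sum_erase (Finset.range (k + 1)) (fun j => 2 * k + 1 - 2 * j + 1)
      (a := 1) (by simp; omega)
    rw [h1] at h2
    have : 2 * k + 1 - 2 * 1 + 1 = 2 * k := by omega
    simp only [this] at h2
    nlinarith

lemma eq_zero_of_pair {n : ℕ} {P : MvPolynomial (ℕ × ℕ) ℂ} (h1 : P.IsHomogeneous n)
    (h2 : P ∈ supported ℂ {m : ℕ × ℕ | Odd (m.1 + m.2)})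
    (h : ∀ m : Fin n → ℕ × ℕ, (∀ i, Odd ((m i).1 + (m i).2)) → pair P (symb n (S m)) = 0) :
    P = 0 := by
  classical
  ext μ
  rw [coeff_zero]
  by_contra hμ
  obtain ⟨l, hl⟩ : ∃ l : List (ℕ × ℕ), l = (Finsupp.toMultiset μ).toList := ⟨_, rfl⟩
  have hlm : (l : Multiset (ℕ × ℕ)) = Finsupp.toMultiset μ := by rw [hl, Multiset.coe_toList]
  have hlen : l.length = n := by
    rw [← Multiset.coe_card, hlm, Finsupp.card_toMultiset]
    have := h1 hμ
    rw [← this, Finsupp.weight_apply]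
    simp
    rfl
  subst hlen
  have hmon : ∏ i : Fin l.length, (X (l.get i) : MvPolynomial (ℕ × ℕ) ℂ) = monomial μ 1 := by
    have e1 : ∏ i : Fin l.length, (X (l.get i) : MvPolynomial (ℕ × ℕ) ℂ) = (l.map X).prod := by
      simp
    rw [e1, ← Multiset.prod_coe, ← Multiset.map_coe, hlm, Finsupp.toMultiset_map,
      Finsupp.prod_toMultiset, monomial_eq, C_1, one_mul, Finsupp.prod_mapDomain_index]
    · simp
    · intro b m₁ m₂; rw [pow_add]
  have hodd : ∀ i, Odd ((l.get i).1 + (l.get i).2) := by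
    intro i
    have hmem : l.get i ∈ Finsupp.toMultiset μ := by
      rw [← hlm, Multiset.mem_coe]; exact List.get_mem _ _
    rw [Finsupp.mem_toMultiset] at hmem
    exact mem_supported.1 h2 (mem_vars _ |>.2 ⟨μ, mem_support_iff.2 hμ, hmem⟩)
  have := h l.get hodd
  have hS : symb l.length (S l.get) = (Fintype.card (Equiv.Perm (Fin l.length))) • monomial μ 1 := by
    rw [S, map_sum, ← hmon]
    rw [Finset.sum_congr rfl (g := fun _ => ∏ i : Fin l.length, (X (l.get i) : MvPolynomial (ℕ × ℕ) ℂ))]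
    · rw [Finset.sum_const]; rfl
    · intro σ _
      rw [symb_T]
      exact Equiv.prod_comp σ (fun i => (X (l.get i) : MvPolynomial (ℕ × ℕ) ℂ))
  rw [hS, map_nsmul, pair_monomial, smul_eq_zero] at this
  rcases this with h | h
  · exact Fintype.card_ne_zero h
  · exact mul_ne_zero (mfact_ne_zero _) hμ h

lemma S_mem_chi {n : ℕ} (m : Fin n → ℕ × ℕ) (hm : ∀ i, Odd ((m i).1 + (m i).2)) :
    Ideal.Quotient.mk (diagIdeal n) (S m) ∈ chiIsotypic n := by
  refine ⟨S m, ?_, rfl⟩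
  simp only [Submodule.coe_iInf, Set.mem_iInter, SetLike.mem_coe, Submodule.mem_comap]
  intro ε σ
  rw [LinearMap.sub_apply, AlgHom.toLinearMap_apply, bAct_S ε σ m hm, LinearMap.smul_apply,
    LinearMap.id_apply, sub_self]
  exact zero_mem _

lemma card_le_finrank (k : ℕ) : (idx k).card ≤ Module.finrank ℂ (chiIsotypic (2 * k + 1)) := by
  classical
  have hfin := finite_quotient (2 * k + 1) (by omega)
  let mkL := (Ideal.Quotient.mkₐ ℂ (diagIdeal (2 * k + 1))).toLinearMap
  obtain ⟨sec, hsec⟩ := mkL.exists_rightInverse_of_surjective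
    (LinearMap.range_eq_top.2 (Ideal.Quotient.mkₐ_surjective ℂ _))
  let Ψ : MvPolynomial (Fin (2 * k + 1) ⊕ Fin (2 * k + 1)) ℂ →ₗ[ℂ] (idx k → ℂ) :=
    LinearMap.pi fun s => pair (fam (2 * k + 1) s) ∘ₗ symb (2 * k + 1)
  have hΨ : ∀ r, Ψ (sec (mkL r)) = Ψ r := by
    intro r
    have h1 : sec (mkL r) - r ∈ diagIdeal (2 * k + 1) := by
      have : mkL (sec (mkL r)) = mkL r := congrArg (fun f => f (mkL r)) hsec
      exact Ideal.Quotient.eq.1 this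
    rw [← sub_eq_zero, ← map_sub]
    funext s
    exact pair_symb_eq_zero (inK_fam s.2).low (diagIdeal_le _ h1)
  let Φ : chiIsotypic (2 * k + 1) →ₗ[ℂ] (idx k → ℂ) := (Ψ ∘ₗ sec).domRestrict _
  have hsurj : LinearMap.range Φ = ⊤ := by
    by_contra hne
    obtain ⟨f, hf0, hf⟩ := Submodule.exists_le_ker_of_lt_top _ (lt_top_iff_ne_top.2 hne)
    apply hf0
    let c : (Σ _ : ℕ, ℕ) → ℂ := fun s => if h : s ∈ idx k then f (Pi.single ⟨s, h⟩ 1) else 0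
    have hc : ∀ s : idx k, c s = f (Pi.single s 1) := fun s => by simp [c]
    have hfv : ∀ v, f v = ∑ s : idx k, c s * v s := by
      intro v
      conv_lhs => rw [pi_eq_sum_univ' v]
      rw [map_sum]
      refine Finset.sum_congr rfl fun s _ => ?_
      rw [map_smul, hc, smul_eq_mul, mul_comm]
    have hzero : ∑ s ∈ idx k, c s • fam (2 * k + 1) s = 0 := by
      refine eq_zero_of_pair (n := 2 * k + 1) ?_ ?_ ?_
      · refine IsHomogeneous.sum _ _ _ fun s hs => ?_
        rw [smul_eq_C_mul]
        simpa using (isHomogeneous_C _ (c s)).mul (inK_fam hs).hom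
      · exact sum_mem fun s hs => Subalgebra.smul_mem _ (inK_fam hs).odd _
      · intro m hm
        rw [pair_sum]
        have h1 := hf (LinearMap.mem_range_self Φ ⟨_, S_mem_chi m hm⟩)
        rw [LinearMap.mem_ker] at h1
        have h2 : Φ ⟨_, S_mem_chi m hm⟩ = Ψ (S m) := hΨ (S m)
        rw [h2, hfv] at h1
        rw [← Finset.sum_coe_sort]
        exact h1
    have := fam_indep k c hzero
    ext s
    simp [← hc, this s s.2]
  have h3 := LinearMap.finrank_range_le Φ
  rw [hsurj, finrank_top, Module.finrank_fintype_fun_eq_card, Fintype.card_coe] at h3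
  exact h3

/-- If `n` is an odd positive integer, then the χ′-isotypic component of the diagonal
coinvariant ring of `W(Bₙ)` satisfies `dim_ℂ (R_W)^{χ'} ≥ (n+1) + (n-1)(n-3)/4`. -/
theorem dim_chi_isotypic_ge_of_odd (n : ℕ) (hn : 0 < n) (hodd : Odd n) :
    ((n : ℤ) + 1) + ((n : ℤ) - 1) * ((n : ℤ) - 3) / 4 ≤
      (Module.finrank ℂ (chiIsotypic n) : ℤ) := by
  obtain ⟨k, rfl⟩ := hodd
  have h := card_le_finrank k
  rw [card_idx] at h
  have h2 : (((2 * k + 1 : ℕ) : ℤ) - 1) * (((2 * k + 1 : ℕ) : ℤ) - 3) / 4 = (k : ℤ) * (k - 1) := by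
    rw [show (((2 * k + 1 : ℕ) : ℤ) - 1) * (((2 * k + 1 : ℕ) : ℤ) - 3) = 4 * ((k : ℤ) * (k - 1)) by
      push_cast; ring]
    exact Int.mul_ediv_cancel_left _ (by norm_num)
  rw [h2]
  have h3 : ((k ^ 2 + k + 2 : ℕ) : ℤ) ≤ Module.finrank ℂ (chiIsotypic (2 * k + 1)) := by
    exact_mod_cast h
  push_cast at h3 ⊢
  linarith
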